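/- Let k be a nonzero element of ℤ² and let g : (0,∞) → ℂ be measurable with ∫₀^∞ |g(w)|² · 2π w (1 + w²) dw < ∞. Then the integral 2π ∫₀^∞ J⁰(‖k‖·w) · g(w) · w dw converges absolutely and satisfies (1 + ‖k‖²)^{1/4} · |2π ∫₀^∞ J⁰(‖k‖·w) g(w) w dw| ≤ 2^{1/4} · π · ( ∫₀^∞ |g(w)|² · 2π w (1 + w²) dw )^{1/2}. This is the per-Fourier-mode form of the estimate ‖ρ − 1‖_{H^{s+1/2}} ≤ 2^{1/4} π ‖f‖_{L²_m(H^s)} for the gyro-averaged density ρ(x) = ∫ J⁰_w f(x,w) 2π w dw. -/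

import Mathlib

open MeasureTheory Real

/-- The zeroth-order Bessel function `J⁰(k) = (1/π) ∫₀^π cos(k cos θ) dθ`. -/
noncomputable def J0 (k : ℝ) : ℝ :=
  (1 / Real.pi) * ∫ θ in (0:ℝ)..Real.pi, Real.cos (k * Real.cos θ)

/-- The Euclidean norm of `k ∈ ℤ²`. -/
noncomputable def eNorm (k : ℤ × ℤ) : ℝ :=
  Real.sqrt ((k.1 : ℝ) ^ 2 + (k.2 : ℝ) ^ 2)

/-- The first-order Bessel function `J¹(k) = (1/π) ∫₀^π sin(k cos θ) cos θ dθ`. -/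
noncomputable def J1 (k : ℝ) : ℝ :=
  (1 / Real.pi) * ∫ θ in (0:ℝ)..Real.pi, Real.sin (k * Real.cos θ) * Real.cos θ

/-- Differentiation under an interval integral of a continuous integrand with continuous,
uniformly bounded derivative. -/
theorem hasDerivAt_intervalIntegral_of_bounded {F F' : ℝ → ℝ → ℝ} {a b x C : ℝ}
    (hF : ∀ y, Continuous (F y)) (hF' : ∀ y, Continuous (F' y))
    (hC : ∀ y θ, |F' y θ| ≤ C) (hd : ∀ y θ, HasDerivAt (fun y => F y θ) (F' y θ) y) :
    HasDerivAt (fun y => ∫ θ in a..b, F y θ) (∫ θ in a..b, F' x θ) x :=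
  (intervalIntegral.hasDerivAt_integral_of_dominated_loc_of_deriv_le (bound := fun _ => C)
    (s := Set.univ) Filter.univ_mem
    (Filter.Eventually.of_forall fun y => (hF y).aestronglyMeasurable)
    ((hF x).intervalIntegrable a b) (hF' x).aestronglyMeasurable
    (Filter.Eventually.of_forall fun θ _ y _ => hC y θ)
    intervalIntegrable_const
    (Filter.Eventually.of_forall fun θ _ y _ => hd y θ)).2

theorem hasDerivAt_J0 (x : ℝ) : HasDerivAt J0 (-J1 x) x := by
  have h := (hasDerivAt_intervalIntegral_of_bounded (a := 0) (b := π) (x := x) (C := 1)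
    (F := fun y θ => cos (y * cos θ)) (F' := fun y θ => -(sin (y * cos θ) * cos θ))
    (by fun_prop) (by fun_prop) (fun y θ => by
      rw [abs_neg, abs_mul]
      exact mul_le_one₀ (abs_sin_le_one _) (abs_nonneg _) (abs_cos_le_one _))
    (fun y θ => by
      simpa using ((hasDerivAt_id y).mul_const (cos θ)).cos)).const_mul (1 / π)
  rw [intervalIntegral.integral_neg, mul_neg] at h
  exact h

/-- `x ∫₀^π cos(x cos θ) sin² θ dθ = ∫₀^π sin(x cos θ) cos θ dθ`, by integration by parts. -/
theorem mul_integral_cos_mul_sin_sq (x : ℝ) :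
    x * ∫ θ in (0:ℝ)..π, cos (x * cos θ) * sin θ ^ 2 =
      ∫ θ in (0:ℝ)..π, sin (x * cos θ) * cos θ := by
  have hd : ∀ θ : ℝ, HasDerivAt (fun θ => sin (x * cos θ) * sin θ)
      (sin (x * cos θ) * cos θ - x * (cos (x * cos θ) * sin θ ^ 2)) θ := fun θ => by
    have h := (((hasDerivAt_cos θ).const_mul x).sin).mul (hasDerivAt_sin θ)
    refine h.congr_deriv ?_
    ring
  have h := intervalIntegral.integral_eq_sub_of_hasDerivAt (a := 0) (b := π)
    (fun θ _ => hd θ) (Continuous.intervalIntegrable (by fun_prop) _ _)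
  rw [intervalIntegral.integral_sub (Continuous.intervalIntegrable (by fun_prop) _ _)
    (Continuous.intervalIntegrable (by fun_prop) _ _),
    intervalIntegral.integral_const_mul] at h
  simp only [sin_pi, sin_zero, mul_zero, sub_zero] at h
  linarith

theorem hasDerivAt_J1 {x : ℝ} (hx : x ≠ 0) : HasDerivAt J1 (J0 x - J1 x / x) x := by
  have h := (hasDerivAt_intervalIntegral_of_bounded (a := 0) (b := π) (x := x) (C := 1)
    (F := fun y θ => sin (y * cos θ) * cos θ)
    (F' := fun y θ => cos (y * cos θ) - cos (y * cos θ) * sin θ ^ 2)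
    (by fun_prop) (by fun_prop) (fun y θ => by
      rw [show cos (y * cos θ) - cos (y * cos θ) * sin θ ^ 2 = cos (y * cos θ) * cos θ ^ 2 by
        rw [cos_sq' θ]; ring, abs_mul]
      exact mul_le_one₀ (abs_cos_le_one _) (abs_nonneg _)
        (by rw [abs_of_nonneg (sq_nonneg _)]; exact cos_sq_le_one θ))
    (fun y θ => by
      refine ((((hasDerivAt_id y).mul_const (cos θ)).sin).mul_const (cos θ)).congr_deriv ?_
      simp only [id]
      rw [sin_sq]; ring)).const_mul (1 / π)
  rw [intervalIntegral.integral_sub (Continuous.intervalIntegrable (by fun_prop) _ _)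
    (Continuous.intervalIntegrable (by fun_prop) _ _)] at h
  refine h.congr_deriv ?_
  rw [J0, J1, ← mul_integral_cos_mul_sin_sq]
  field_simp

theorem abs_J0_le_one (x : ℝ) : |J0 x| ≤ 1 := by
  have h := intervalIntegral.norm_integral_le_of_norm_le_const (a := 0) (b := π) (C := 1)
    (f := fun θ => cos (x * cos θ)) (fun θ _ => abs_cos_le_one _)
  rw [sub_zero, abs_of_pos pi_pos, one_mul, norm_eq_abs] at h
  rw [J0, abs_mul, abs_of_pos (by positivity)]
  calc 1 / π * _ ≤ 1 / π * π := by gcongr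
    _ = 1 := by field_simp

theorem integral_cos_sq_zero_pi : ∫ θ in (0:ℝ)..π, cos θ ^ 2 = π / 2 := by
  simp [integral_cos_sq]

theorem J0_one_nonneg : 0 ≤ J0 1 := by
  refine mul_nonneg (by positivity) (intervalIntegral.integral_nonneg pi_pos.le fun θ _ => ?_)
  have := pi_gt_three
  exact cos_nonneg_of_mem_Icc ⟨by linarith [neg_one_le_cos θ], by linarith [cos_le_one θ]⟩

theorem J0_one_le : J0 1 ≤ 1 - 43 / 192 := by
  have h : ∫ θ in (0:ℝ)..π, cos (1 * cos θ) ≤ ∫ θ in (0:ℝ)..π, (1 - 43 / 96 * cos θ ^ 2) := by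
    refine intervalIntegral.integral_mono_on pi_pos.le
      (Continuous.intervalIntegrable (by fun_prop) _ _)
      (Continuous.intervalIntegrable (by fun_prop) _ _) fun θ _ => ?_
    rw [one_mul]
    have hb := (abs_le.1 (cos_bound (abs_cos_le_one θ))).2
    have hs : |cos θ| ^ 4 ≤ cos θ ^ 2 := by
      rw [← sq_abs (cos θ)]
      exact pow_le_pow_of_le_one (abs_nonneg _) (abs_cos_le_one θ) (by norm_num)
    linarith
  rw [intervalIntegral.integral_sub (by simp)
    (Continuous.intervalIntegrable (by fun_prop) _ _), intervalIntegral.integral_const_mul,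
    integral_cos_sq_zero_pi, intervalIntegral.integral_const] at h
  calc J0 1 ≤ 1 / π * _ := mul_le_mul_of_nonneg_left h (by positivity)
    _ = 1 - 43 / 192 := by simp only [smul_eq_mul]; field_simp; ring

theorem sin_mul_self_mem_Icc {c : ℝ} (hc : |c| ≤ 1) : sin c * c ∈ Set.Icc 0 (c ^ 2) := by
  have hpi := pi_gt_three
  rw [abs_le] at hc
  rcases le_total 0 c with h | h
  · have h0 := sin_nonneg_of_nonneg_of_le_pi h (by linarith)
    exact ⟨by positivity, by nlinarith [sin_le h]⟩
  · have h0 := sin_nonpos_of_nonpos_of_neg_pi_le h (by linarith)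
    exact ⟨mul_nonneg_of_nonpos_of_nonpos h0 h, by nlinarith [le_sin h]⟩

theorem J1_one_nonneg : 0 ≤ J1 1 :=
  mul_nonneg (by positivity) (intervalIntegral.integral_nonneg pi_pos.le fun θ _ => by
    simpa using (sin_mul_self_mem_Icc (abs_cos_le_one θ)).1)

theorem J1_one_le : J1 1 ≤ 1 / 2 := by
  have h : ∫ θ in (0:ℝ)..π, sin (1 * cos θ) * cos θ ≤ ∫ θ in (0:ℝ)..π, cos θ ^ 2 :=
    intervalIntegral.integral_mono_on pi_pos.le
      (Continuous.intervalIntegrable (by fun_prop) _ _)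
      (Continuous.intervalIntegrable (by fun_prop) _ _) fun θ _ => by
        simpa using (sin_mul_self_mem_Icc (abs_cos_le_one θ)).2
  rw [integral_cos_sq_zero_pi] at h
  calc J1 1 ≤ 1 / π * (π / 2) := mul_le_mul_of_nonneg_left h (by positivity)
    _ = 1 / 2 := by field_simp

/-- The energy `u'² + (1 + 1/(4x²)) u²` of `u(x) = √x J⁰(x)`, which solves
`u'' + (1 + 1/(4x²)) u = 0`. -/
noncomputable def besselEnergy (x : ℝ) : ℝ :=
  x * (J0 x ^ 2 + J1 x ^ 2) - J0 x * J1 x + J0 x ^ 2 / (2 * x)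

theorem hasDerivAt_besselEnergy {x : ℝ} (hx : x ≠ 0) :
    HasDerivAt besselEnergy (-(J0 x ^ 2 / (2 * x ^ 2))) x := by
  have h0 := hasDerivAt_J0 x
  have h1 := hasDerivAt_J1 hx
  have h := (((hasDerivAt_id x).mul ((h0.pow 2).add (h1.pow 2))).sub (h0.mul h1)).add
    ((h0.pow 2).div ((hasDerivAt_id x).const_mul 2) (by simpa using hx))
  refine h.congr_deriv ?_
  simp only [id, Pi.add_apply, Pi.pow_apply]
  field_simp
  ring

theorem antitoneOn_besselEnergy : AntitoneOn besselEnergy (Set.Ici 1) := by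
  have hd : ∀ x ∈ Set.Ici (1:ℝ), HasDerivAt besselEnergy (-(J0 x ^ 2 / (2 * x ^ 2))) x :=
    fun x hx => hasDerivAt_besselEnergy (zero_lt_one.trans_le hx).ne'
  refine antitoneOn_of_deriv_nonpos (convex_Ici 1)
    (fun x hx => (hd x hx).continuousAt.continuousWithinAt)
    (fun x hx => (hd x (interior_subset hx)).differentiableAt.differentiableWithinAt)
    fun x hx => ?_
  rw [(hd x (interior_subset hx)).deriv]
  exact neg_nonpos.2 (by positivity)

theorem besselEnergy_one_le : besselEnergy 1 ≤ 1 := by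
  have := J0_one_nonneg
  have := J0_one_le
  have := J1_one_nonneg
  have := J1_one_le
  rw [besselEnergy]
  nlinarith

theorem mul_J0_sq_le_besselEnergy {x : ℝ} (hx : 0 < x) : x * J0 x ^ 2 ≤ besselEnergy x := by
  have h : besselEnergy x - x * J0 x ^ 2 =
      x * (J1 x - J0 x / (2 * x)) ^ 2 + J0 x ^ 2 / (4 * x) := by
    rw [besselEnergy]
    field_simp
    ring
  have : 0 ≤ x * (J1 x - J0 x / (2 * x)) ^ 2 + J0 x ^ 2 / (4 * x) := by positivity
  linarith

theorem mul_J0_sq_le_one {x : ℝ} (hx : 0 < x) : x * J0 x ^ 2 ≤ 1 := by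
  rcases le_total x 1 with h | h
  · exact mul_le_one₀ h (sq_nonneg _) ((sq_le_one_iff_abs_le_one _).2 (abs_J0_le_one x))
  · exact (mul_J0_sq_le_besselEnergy hx).trans
      ((antitoneOn_besselEnergy Set.self_mem_Ici h h).trans besselEnergy_one_le)

theorem continuous_J0 : Continuous J0 :=
  continuous_iff_continuousAt.2 fun x => (hasDerivAt_J0 x).continuousAt

theorem one_le_eNorm {k : ℤ × ℤ} (hk : k ≠ 0) : 1 ≤ eNorm k := by
  have h : (1:ℤ) ≤ k.1 ^ 2 + k.2 ^ 2 := by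
    by_contra! hlt
    refine hk (Prod.ext ?_ ?_)
    · exact pow_eq_zero_iff two_ne_zero |>.1 (by nlinarith [sq_nonneg k.1, sq_nonneg k.2])
    · exact pow_eq_zero_iff two_ne_zero |>.1 (by nlinarith [sq_nonneg k.1, sq_nonneg k.2])
  rw [eNorm, Real.one_le_sqrt]
  exact_mod_cast h

theorem one_add_sq_rpow_quarter_le {K : ℝ} (hK : 1 ≤ K) :
    (1 + K ^ 2) ^ ((1:ℝ)/4) ≤ 2 ^ ((1:ℝ)/4) * √K := by
  have hK0 : 0 ≤ K := zero_le_one.trans hK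
  calc (1 + K ^ 2) ^ ((1:ℝ)/4) ≤ (2 * K ^ 2) ^ ((1:ℝ)/4) := by
        gcongr
        nlinarith
    _ = 2 ^ ((1:ℝ)/4) * √K := by
        rw [mul_rpow zero_le_two (sq_nonneg K), ← rpow_natCast K 2, ← rpow_mul hK0, sqrt_eq_rpow]
        norm_num

/-- The decay `|J⁰(x)| ≤ x^{-1/2}` in the form used to split the integrand for Cauchy–Schwarz. -/
theorem abs_J0_mul_le {K w : ℝ} (hK : 0 < K) (hw : 0 < w) :
    |J0 (K * w)| * w ≤ √(2 * π * w * (1 + w ^ 2)) * √((2 * π * K)⁻¹ * (1 + w ^ 2)⁻¹) := by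
  rw [← sqrt_mul (by positivity)]
  apply le_sqrt_of_sq_le
  rw [mul_pow, sq_abs]
  have h := mul_J0_sq_le_one (mul_pos hK hw)
  have : 2 * π * w * (1 + w ^ 2) * ((2 * π * K)⁻¹ * (1 + w ^ 2)⁻¹) = w / K := by field_simp
  rw [this, le_div_iff₀ hK]
  nlinarith

/-- Per-Fourier-mode form of the estimate
`‖ρ - 1‖_{H^{s+1/2}} ≤ 2^{1/4} π ‖f‖_{L²_m(H^s)}` for the gyro-averaged density. -/
theorem density_mode_bound (k : ℤ × ℤ) (hk : k ≠ 0) (g : ℝ → ℂ)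
    (hmeas : Measurable g)
    (hint : IntegrableOn
      (fun w => ‖g w‖ ^ 2 * (2 * Real.pi * w * (1 + w ^ 2))) (Set.Ioi (0:ℝ))) :
    IntegrableOn (fun w => (J0 (eNorm k * w) : ℂ) * g w * (w : ℂ)) (Set.Ioi (0:ℝ)) ∧
    (1 + eNorm k ^ 2) ^ ((1:ℝ)/4) *
        ‖(2 * Real.pi : ℂ) * ∫ w in Set.Ioi (0:ℝ), (J0 (eNorm k * w) : ℂ) * g w * (w : ℂ)‖
      ≤ (2:ℝ) ^ ((1:ℝ)/4) * Real.pi *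
        Real.sqrt (∫ w in Set.Ioi (0:ℝ), ‖g w‖ ^ 2 * (2 * Real.pi * w * (1 + w ^ 2))) := by
  set K := eNorm k
  have hK1 : 1 ≤ K := one_le_eNorm hk
  have hK : 0 < K := zero_lt_one.trans_le hK1
  set μ : Measure ℝ := volume.restrict (Set.Ioi 0)
  set A : ℝ → ℝ := fun w => ‖g w‖ * √(2 * π * w * (1 + w ^ 2)) with hA
  set B : ℝ → ℝ := fun w => √((2 * π * K)⁻¹ * (1 + w ^ 2)⁻¹) with hB
  have hA2 : (fun w => A w ^ 2) =ᵐ[μ] fun w => ‖g w‖ ^ 2 * (2 * π * w * (1 + w ^ 2)) := by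
    filter_upwards [ae_restrict_mem measurableSet_Ioi] with w hw
    have hw : 0 < w := hw
    simp only [hA]
    rw [mul_pow, sq_sqrt (by positivity)]
  have hB2 : (fun w => B w ^ 2) = fun w => (2 * π * K)⁻¹ * (1 + w ^ 2)⁻¹ := by
    funext w
    exact sq_sqrt (by positivity)
  have hAL : MemLp A 2 μ := (memLp_two_iff_integrable_sq (by fun_prop)).2
    ((integrable_congr hA2).2 hint)
  have hBL : MemLp B 2 μ := (memLp_two_iff_integrable_sq (by fun_prop)).2 (by
    rw [hB2]
    exact (integrable_inv_one_add_sq.const_mul _).restrict)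
  have hAB : Integrable (fun w => A w * B w) μ := hAL.integrable_mul hBL
  have hle : ∀ᵐ w ∂μ, ‖(J0 (K * w) : ℂ) * g w * (w : ℂ)‖ ≤ A w * B w := by
    filter_upwards [ae_restrict_mem measurableSet_Ioi] with w hw
    have hw : 0 < w := hw
    rw [norm_mul, norm_mul, Complex.norm_real, Complex.norm_real, norm_eq_abs, norm_eq_abs,
      abs_of_pos hw]
    calc |J0 (K * w)| * ‖g w‖ * w = ‖g w‖ * (|J0 (K * w)| * w) := by ring
      _ ≤ ‖g w‖ * (√(2 * π * w * (1 + w ^ 2)) * √((2 * π * K)⁻¹ * (1 + w ^ 2)⁻¹)) :=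
        mul_le_mul_of_nonneg_left (abs_J0_mul_le hK hw) (norm_nonneg _)
      _ = A w * B w := by simp only [hA, hB]; ring
  have hmeasJ := continuous_J0.measurable
  refine ⟨hAB.mono' (by fun_prop) hle, ?_⟩
  have hCS := integral_mul_le_Lp_mul_Lq_of_nonneg (μ := μ) (f := A) (g := B)
    Real.HolderConjugate.two_two
    (Filter.Eventually.of_forall fun w => by positivity)
    (Filter.Eventually.of_forall fun w => by positivity) (by simpa using hAL) (by simpa using hBL)
  simp only [rpow_two] at hCS
  rw [← sqrt_eq_rpow, ← sqrt_eq_rpow, integral_congr_ae hA2, hB2, integral_const_mul,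
    integral_Ioi_inv_one_add_sq, arctan_zero, sub_zero,
    show (2 * π * K)⁻¹ * (π / 2) = (2 * √K)⁻¹ ^ 2 by
      rw [inv_pow, mul_pow, sq_sqrt hK.le]; field_simp,
    sqrt_sq (by positivity)] at hCS
  set I := ∫ w, ‖g w‖ ^ 2 * (2 * π * w * (1 + w ^ 2)) ∂μ
  have hN := (norm_integral_le_of_norm_le hAB hle).trans hCS
  rw [norm_mul, show ‖(2 * π : ℂ)‖ = 2 * π by simp [abs_of_pos pi_pos]]
  calc (1 + K ^ 2) ^ ((1:ℝ)/4) * (2 * π * _)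
      ≤ (2 ^ ((1:ℝ)/4) * √K) * (2 * π * (√I * (2 * √K)⁻¹)) := by
        gcongr
        exact one_add_sq_rpow_quarter_le hK1
    _ = 2 ^ ((1:ℝ)/4) * π * √I := by
        have := (sqrt_pos.2 hK).ne'
        field_simp
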